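/- arXiv:1107.1347 — 2 statements merged into one kernel-verified Lean document; each statement's English description precedes it below -/
import Mathlib

section
/- Let X be a finite alphabet, p : X → ℝ a probability distribution, {ρ_x}_{x∈X} density operators on ℂ^n, Π an orthogonal projector, and {Π_x}_{x∈X} orthogonal projectors on ℂ^n. Suppose that for all x ∈ X: Tr(Π ρ_x) ≥ 1 − ε, Tr(Π_x ρ_x) ≥ 1 − ε, and Π_x ρ_x = ρ_x Π_x, where 0 ≤ ε. Then Σ_{x∈X} p(x) · Tr(Π_x ρ_x Π_x Π) ≥ 1 − 2ε. -/
open Matrix ComplexOrder BigOperators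

/-! Compressing a positive `ρ` by a commuting projector `Q` only removes the positive part
`(1 - Q) ρ (1 - Q)`, so its overlap with any `P ≤ 1` drops by at most the weight `Tr ρ - Tr (Q ρ)`
of that part. For a state this weight is at most `ε`, and the bound survives averaging. -/

section

open scoped MatrixOrder

theorem conjugate_le_self_of_commute {R : Type*} [Ring R] [PartialOrder R] [StarRing R]
    [StarOrderedRing R] {a q : R} (ha : 0 ≤ a) (hq : IsStarProjection q) (hqa : Commute q a) :
    q * a * q ≤ a := by
  have compl_conjugate : (1 - q) * a * (1 - q) = a - q * a * q := by
    have hqaq : q * a * q = q * a := by rw [hqa.eq, mul_assoc, hq.isIdempotentElem.eq]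
    rw [mul_sub, mul_one, sub_mul, sub_mul, one_mul, hqaq, ← hqa.eq, sub_self, sub_zero]
  exact sub_nonneg.mp (compl_conjugate ▸ hq.one_sub.isSelfAdjoint.conjugate_nonneg ha)

variable {𝕜 m : Type*} [RCLike 𝕜] [Fintype m]

theorem trace_mul_nonneg {A B : Matrix m m 𝕜} (hA : 0 ≤ A) (hB : 0 ≤ B) :
    0 ≤ (A * B).trace := by
  classical
  obtain ⟨C, rfl⟩ := CStarAlgebra.nonneg_iff_eq_star_mul_self.mp hB
  rw [← mul_assoc, trace_mul_comm, ← mul_assoc]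
  exact (star_right_conjugate_nonneg hA C).posSemidef.trace_nonneg

variable [DecidableEq m]

theorem trace_mul_le_trace {A B : Matrix m m 𝕜} (hA : 0 ≤ A) (hB : B ≤ 1) :
    (A * B).trace ≤ A.trace := by
  have h : 0 ≤ (A * (1 - B)).trace := trace_mul_nonneg hA (sub_nonneg.mpr hB)
  rwa [mul_sub, mul_one, trace_sub, sub_nonneg] at h

theorem trace_mul_sub_trace_conjugate_mul_le {ρ P Q : Matrix m m 𝕜} (hρ : 0 ≤ ρ) (hP : P ≤ 1)
    (hQ : IsStarProjection Q) (hQρ : Commute Q ρ) :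
    (ρ * P).trace - (Q * ρ * Q * P).trace ≤ ρ.trace - (Q * ρ).trace :=
  calc (ρ * P).trace - (Q * ρ * Q * P).trace
      = ((ρ - Q * ρ * Q) * P).trace := by rw [sub_mul, trace_sub]
    _ ≤ (ρ - Q * ρ * Q).trace :=
      trace_mul_le_trace (sub_nonneg.mpr (conjugate_le_self_of_commute hρ hQ hQρ)) hP
    _ = ρ.trace - (Q * ρ).trace := by
      rw [trace_sub, trace_mul_cycle, hQ.isIdempotentElem.eq]

theorem avg_sandwiched_overlap_general {X : Type*} [Fintype X] {p : X → ℝ}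
    (hp : ∀ x, 0 ≤ p x) (hpsum : ∑ x, p x = 1) {ρ : X → Matrix m m 𝕜} (hρ : ∀ x, 0 ≤ ρ x)
    (hρtr : ∀ x, (ρ x).trace ≤ 1) {P : Matrix m m 𝕜} (hP : P ≤ 1) {Q : X → Matrix m m 𝕜}
    (hQ : ∀ x, IsStarProjection (Q x)) (hQρ : ∀ x, Commute (Q x) (ρ x)) {ε : ℝ}
    (hPε : ∀ x, 1 - ε ≤ RCLike.re (P * ρ x).trace)
    (hQε : ∀ x, 1 - ε ≤ RCLike.re (Q x * ρ x).trace) :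
    1 - 2 * ε ≤ ∑ x, p x * RCLike.re (Q x * ρ x * Q x * P).trace := by
  refine (convex_Ici (𝕜 := ℝ) (1 - 2 * ε)).sum_mem (fun x _ ↦ hp x) hpsum fun x _ ↦
    Set.mem_Ici.mpr ?_
  have overlap_loss := RCLike.re_monotone
    (trace_mul_sub_trace_conjugate_mul_le (hρ x) hP (hQ x) (hQρ x))
  have trace_le := RCLike.re_monotone (hρtr x)
  rw [map_sub, map_sub, trace_mul_comm] at overlap_loss
  rw [RCLike.one_re] at trace_le
  linarith [hPε x, hQε x]

end

/-- Let `p` be a probability distribution on a finite alphabet `X`,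
`ρ_x` density operators, `Π` and `Π_x` orthogonal projectors with
`Tr(Π ρ_x) ≥ 1 − ε`, `Tr(Π_x ρ_x) ≥ 1 − ε`, and `Π_x ρ_x = ρ_x Π_x` for all `x`,
where `ε ≥ 0`.  Then `Σ_x p(x) Tr(Π_x ρ_x Π_x Π) ≥ 1 − 2ε`. -/
theorem avg_sandwiched_overlap {n : ℕ} {X : Type*} [Fintype X]
    (p : X → ℝ) (hp : ∀ x, 0 ≤ p x) (hpsum : ∑ x, p x = 1)
    (ρx : X → Matrix (Fin n) (Fin n) ℂ)
    (hρx : ∀ x, (ρx x).PosSemidef ∧ (ρx x).trace = 1)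
    (P : Matrix (Fin n) (Fin n) ℂ)
    (hP : P.IsHermitian ∧ P * P = P)
    (Px : X → Matrix (Fin n) (Fin n) ℂ)
    (hPx : ∀ x, (Px x).IsHermitian ∧ Px x * Px x = Px x)
    (ε : ℝ) (hε : 0 ≤ ε)
    (h1 : ∀ x, 1 - ε ≤ ((P * ρx x).trace).re)
    (h2 : ∀ x, 1 - ε ≤ ((Px x * ρx x).trace).re)
    (h5 : ∀ x, Px x * ρx x = ρx x * Px x) :
    1 - 2 * ε ≤ ∑ x, p x * ((Px x * ρx x * Px x * P).trace).re := by
  open scoped MatrixOrder in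
  exact avg_sandwiched_overlap_general hp hpsum (fun x ↦ (hρx x).1.nonneg)
    (fun x ↦ (hρx x).2.le) (IsStarProjection.mk hP.2 hP.1).le_one
    (fun x ↦ ⟨(hPx x).2, (hPx x).1⟩) h5 h1 h2
end

section
/- Symplectic eigenvalues of the Alice–receiver covariance matrix: Let η ∈ [0,1] and N_a, N_b ≥ 0 be real numbers. Let V^{AC} be the real 4×4 matrix with rows (2N_a+1, 0, 2√η·√(N_a(N_a+1)), 0), (0, 2N_a+1, 0, −2√η·√(N_a(N_a+1))), (2√η·√(N_a(N_a+1)), 0, 2(ηN_a+(1−η)N_b)+1, 0), (0, −2√η·√(N_a(N_a+1)), 0, 2(ηN_a+(1−η)N_b)+1), and let J be the block-diagonal 4×4 matrix with two diagonal blocks equal to [[0,1],[−1,0]]. Then the characteristic polynomial of J·V^{AC} equals (X² + (λ_{AC}^+)²)·(X² + (λ_{AC}^−)²), where λ_{AC}^± = (1−η)|N_a − N_b| ± √((1−η)²(N_a − N_b)² + 2(1−η)(2N_aN_b + N_a + N_b) + 1); equivalently, the eigenvalues of i·J·V^{AC} are λ_{AC}^+, −λ_{AC}^+, λ_{AC}^−,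 −λ_{AC}^−. -/
/-!
In the ordering `q₁, q₂, p₁, p₂` of the quadratures, a covariance matrix without `q`–`p`
correlations is block diagonal, `V = A ⊕ B`, and `J V` is block antidiagonal. Its characteristic
polynomial is therefore that of the `2 × 2` matrix `-B A`, evaluated at `X²`, and only the trace and
determinant of `B A` are needed. For local variances `a`, `b` and correlations `s`, `-s` these are
`a² + b² - 2 s²` and `(a b - s²)²`, which gives the symplectic eigenvalues
`|a - b| / 2 ± √(((a + b) / 2)² - s²)` up to sign.
-/

open Matrix Polynomial

section BlockAntidiagonal

variable {R m n : Type*} [CommRing R] [Fintype m] [DecidableEq m] [Fintype n] [DecidableEq n]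

lemma det_scalar_X_pow_sub_map_C (M : Matrix m m R) (k : ℕ) :
    (scalar m (X ^ k : R[X]) - M.map C).det = expand R k M.charpoly := by
  rw [charpoly, AlgHom.map_det]
  congr 1
  ext1 i j
  by_cases h : i = j <;> simp [h]

lemma X_pow_mul_charpoly_fromBlocks_antidiagonal (A : Matrix m n R) (B : Matrix n m R) :
    X ^ Fintype.card m * (fromBlocks 0 A B 0).charpoly =
      X ^ Fintype.card n * expand R 2 (A * B).charpoly := by
  have h_triangular : (fromBlocks 0 A B 0).charmatrix *
      fromBlocks (scalar m X) 0 (B.map C) 1 =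
      fromBlocks (scalar m (X ^ 2) - (A * B).map C) (-A.map C) 0 (scalar n X) := by
    rw [charmatrix_fromBlocks, fromBlocks_multiply]
    congr 1
    · simp [Matrix.map_mul, sub_eq_add_neg, sq]
    · simp
    · simp [← smul_eq_diagonal_mul, ← smul_eq_mul_diagonal]
    · simp
  have h_det := congrArg det h_triangular
  rw [det_mul, det_fromBlocks_zero₁₂, det_fromBlocks_zero₂₁, det_scalar_X_pow_sub_map_C] at h_det
  simpa [charpoly, mul_comm] using h_det

lemma charpoly_fromBlocks_antidiagonal (A B : Matrix n n R) :
    (fromBlocks 0 A B 0).charpoly = expand R 2 (A * B).charpoly :=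
  (isRegular_X_pow _).left.eq_iff.mp <| X_pow_mul_charpoly_fromBlocks_antidiagonal A B

lemma charpoly_neg_J_mul_fromBlocks_diagonal (A B : Matrix n n R) :
    (-J n R * fromBlocks A 0 0 B).charpoly = expand R 2 (-(B * A)).charpoly := by
  have h_antidiagonal : -J n R * fromBlocks A 0 0 B = fromBlocks 0 B (-A) 0 := by
    simp [J, fromBlocks_neg, fromBlocks_multiply]
  rw [h_antidiagonal, charpoly_fromBlocks_antidiagonal, mul_neg]

end BlockAntidiagonal

section TwoMode

/-- The standard symplectic form of two modes, for quadratures ordered as `q₁, p₁, q₂, p₂`;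
its sign is opposite to that of `Matrix.J`. -/
def twoModeSymplecticForm (R : Type*) [CommRing R] : Matrix (Fin 4) (Fin 4) R :=
  !![0, 1, 0, 0; -1, 0, 0, 0; 0, 0, 0, 1; 0, 0, -1, 0]

variable {R : Type*} [CommRing R]

/-- The two-mode covariance matrix in standard form with local variances `a`, `b`, position
correlation `c` and momentum correlation `d`, for quadratures ordered as `q₁, p₁, q₂, p₂`. -/
def twoModeStandardForm (a b c d : R) : Matrix (Fin 4) (Fin 4) R :=
  !![a, 0, c, 0; 0, a, 0, d; c, 0, b, 0; 0, d, 0, b]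

/-- The reordering of two-mode quadratures from `q₁, q₂, p₁, p₂`, where the positions form the left
summand, to `q₁, p₁, q₂, p₂`. -/
def quadratureReordering : Fin 2 ⊕ Fin 2 ≃ Fin 4 where
  toFun := Sum.elim ![0, 2] ![1, 3]
  invFun := ![.inl 0, .inr 0, .inl 1, .inr 1]
  left_inv := by decide
  right_inv := by decide

lemma reindex_neg_J_eq_twoModeSymplecticForm :
    reindex quadratureReordering quadratureReordering (-J (Fin 2) R) = twoModeSymplecticForm R := by
  ext i j
  fin_cases i <;> fin_cases j <;> simp [quadratureReordering, J, twoModeSymplecticForm]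

lemma reindex_fromBlocks_eq_twoModeStandardForm (a b c d : R) :
    reindex quadratureReordering quadratureReordering
      (fromBlocks !![a, c; c, b] 0 0 !![a, d; d, b]) = twoModeStandardForm a b c d := by
  ext i j
  fin_cases i <;> fin_cases j <;> simp [quadratureReordering, twoModeStandardForm]

lemma charpoly_twoModeSymplecticForm_mul_standardForm_eq_expand (a b c d : R) :
    (twoModeSymplecticForm R * twoModeStandardForm a b c d).charpoly =
      expand R 2 (-(!![a, d; d, b] * !![a, c; c, b])).charpoly := by
  rw [← reindex_neg_J_eq_twoModeSymplecticForm, ← reindex_fromBlocks_eq_twoModeStandardForm,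
    reindex_apply, reindex_apply, submatrix_mul_equiv, ← reindex_apply, charpoly_reindex,
    charpoly_neg_J_mul_fromBlocks_diagonal]

lemma charpoly_twoModeSymplecticForm_mul_standardForm (a b c d : R) :
    (twoModeSymplecticForm R * twoModeStandardForm a b c d).charpoly =
      X ^ 4 + C (a ^ 2 + b ^ 2 + 2 * c * d) * X ^ 2 + C ((a * b - c ^ 2) * (a * b - d ^ 2)) := by
  nontriviality R
  have h_trace : (-(!![a, d; d, b] * !![a, c; c, b])).trace = -(a ^ 2 + b ^ 2 + 2 * c * d) := by
    simp only [trace_neg, mul_fin_two, trace_fin_two_of]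
    ring
  have h_det : (-(!![a, d; d, b] * !![a, c; c, b])).det =
      (a * b - c ^ 2) * (a * b - d ^ 2) := by
    simp only [det_neg, det_mul, det_fin_two_of, Fintype.card_fin]
    ring
  rw [charpoly_twoModeSymplecticForm_mul_standardForm_eq_expand, charpoly_fin_two, h_trace, h_det]
  simp only [map_add, map_sub, map_mul, map_neg, map_pow, expand_X, expand_C]
  ring

lemma charpoly_twoModeSymplecticForm_mul_standardForm_neg {a b s : ℝ}
    (hs : s ^ 2 ≤ ((a + b) / 2) ^ 2) :
    (twoModeSymplecticForm ℝ * twoModeStandardForm a b s (-s)).charpoly =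
      (X ^ 2 + C ((|a - b| / 2 + √(((a + b) / 2) ^ 2 - s ^ 2)) ^ 2)) *
        (X ^ 2 + C ((|a - b| / 2 - √(((a + b) / 2) ^ 2 - s ^ 2)) ^ 2)) := by
  have h_sqrt := Real.sq_sqrt (sub_nonneg.mpr hs)
  have h_abs := sq_abs (a - b)
  set r := √(((a + b) / 2) ^ 2 - s ^ 2)
  have h_sum : a ^ 2 + b ^ 2 + 2 * s * -s = (|a - b| / 2 + r) ^ 2 + (|a - b| / 2 - r) ^ 2 := by
    linear_combination -2 * h_sqrt - h_abs / 2
  have h_prod : a * b - s ^ 2 = -((|a - b| / 2 + r) * (|a - b| / 2 - r)) := by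
    linear_combination h_abs / 4 - h_sqrt
  rw [charpoly_twoModeSymplecticForm_mul_standardForm, h_sum, neg_sq, h_prod]
  simp only [map_add, map_neg, map_mul, map_pow]
  ring

end TwoMode

/-- Symplectic eigenvalues of the Alice–receiver covariance matrix:
for `η ∈ [0,1]` and `N_a, N_b ≥ 0`, the characteristic polynomial of `J·V^{AC}` equals
`(X² + (λ_{AC}^+)²)(X² + (λ_{AC}^−)²)`, where
`λ_{AC}^± = (1−η)|N_a−N_b| ± √((1−η)²(N_a−N_b)² + 2(1−η)(2N_aN_b+N_a+N_b) + 1)`. -/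
theorem symplectic_eigenvalues_AC (η Na Nb : ℝ)
    (hη : 0 ≤ η) (hη' : η ≤ 1) (hNa : 0 ≤ Na) (hNb : 0 ≤ Nb) :
    let s : ℝ := 2 * Real.sqrt η * Real.sqrt (Na * (Na + 1))
    let VAC : Matrix (Fin 4) (Fin 4) ℝ :=
      !![2 * Na + 1, 0, s, 0;
         0, 2 * Na + 1, 0, -s;
         s, 0, 2 * (η * Na + (1 - η) * Nb) + 1, 0;
         0, -s, 0, 2 * (η * Na + (1 - η) * Nb) + 1]
    let J : Matrix (Fin 4) (Fin 4) ℝ :=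
      !![0, 1, 0, 0;
         -1, 0, 0, 0;
         0, 0, 0, 1;
         0, 0, -1, 0]
    let lp : ℝ := (1 - η) * |Na - Nb| +
      Real.sqrt ((1 - η) ^ 2 * (Na - Nb) ^ 2 + 2 * (1 - η) * (2 * Na * Nb + Na + Nb) + 1)
    let lm : ℝ := (1 - η) * |Na - Nb| -
      Real.sqrt ((1 - η) ^ 2 * (Na - Nb) ^ 2 + 2 * (1 - η) * (2 * Na * Nb + Na + Nb) + 1)
    (J * VAC).charpoly = (X ^ 2 + C (lp ^ 2)) * (X ^ 2 + C (lm ^ 2)) := by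
  intro s
  have hη_compl : 0 ≤ 1 - η := sub_nonneg.mpr hη'
  have hs : s ^ 2 = 4 * η * (Na * (Na + 1)) := by
    simp only [s, mul_pow, Real.sq_sqrt hη, Real.sq_sqrt (show 0 ≤ Na * (Na + 1) by positivity)]
    ring
  have h_half_diff : |2 * Na + 1 - (2 * (η * Na + (1 - η) * Nb) + 1)| / 2 =
      (1 - η) * |Na - Nb| := by
    rw [show 2 * Na + 1 - (2 * (η * Na + (1 - η) * Nb) + 1) = (1 - η) * (Na - Nb) * 2 by ring,
      abs_mul, abs_mul, abs_of_nonneg hη_compl, abs_two, mul_div_cancel_right₀ _ two_ne_zero]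
  have h_radicand : ((2 * Na + 1 + (2 * (η * Na + (1 - η) * Nb) + 1)) / 2) ^ 2 - s ^ 2 =
      (1 - η) ^ 2 * (Na - Nb) ^ 2 + 2 * (1 - η) * (2 * Na * Nb + Na + Nb) + 1 := by
    rw [hs]
    ring
  have hs_le : s ^ 2 ≤ ((2 * Na + 1 + (2 * (η * Na + (1 - η) * Nb) + 1)) / 2) ^ 2 := by
    rw [← sub_nonneg, h_radicand]
    positivity
  have h_charpoly := charpoly_twoModeSymplecticForm_mul_standardForm_neg hs_le
  rwa [h_half_diff, h_radicand] at h_charpoly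
end
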